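/- For every D ∈ (0, D_max) there exists a probability mass function Q* on Â achieving the infimum defining R(D), i.e., R(P,Q*,D) = R(D), and this Q* satisfies D_min^{P,Q*} < D < D_max^{P,Q*}. -/

import Mathlib

open Real MeasureTheory Finset
open scoped Classical

/-- `Q` is a probability mass function on `Fin k`. -/
def IsPmf {k : ℕ} (Q : Fin k → ℝ) : Prop := (∀ j, 0 ≤ Q j) ∧ ∑ j, Q j = 1

/-- `Λ_{P,Q}(λ) = E_P[ln Σ_j Q_j e^{λ ρ(X,a_j)}]`. -/
noncomputable def Lam {k : ℕ} (P : Measure ℝ) (ρ : ℝ → Fin k → ℝ)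
    (Q : Fin k → ℝ) (l : ℝ) : ℝ :=
  ∫ x, Real.log (∑ j, Q j * Real.exp (l * ρ x j)) ∂P

/-- The cost `∫ Σ_j W(x)({a_j}) log₂ (W(x)({a_j}) / Q_j) dP(x)` of a Markov kernel,
with the conventions `0 · log 0 = 0` (automatic in Lean) and value `⊤` if on a set of
positive `P`-measure `w x j > 0` for some `j` with `Q j = 0`. -/
noncomputable def wCost {k : ℕ} (P : Measure ℝ) (Q : Fin k → ℝ)
    (w : ℝ → Fin k → ℝ) : EReal :=
  if ∀ᵐ x ∂P, ∀ j, 0 < w x j → 0 < Q j then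
    ((∫ x, ∑ j, w x j * Real.logb 2 (w x j / Q j) ∂P : ℝ) : EReal)
  else ⊤

/-- `R(P,Q,D)`: infimum over Markov kernels `w` from `ℝ` to `Fin k` with
`∫ Σ_j w x j ρ(x,a_j) dP ≤ D` of the relative-entropy cost. -/
noncomputable def RPQ {k : ℕ} (P : Measure ℝ) (ρ : ℝ → Fin k → ℝ)
    (Q : Fin k → ℝ) (D : ℝ) : EReal :=
  ⨅ w ∈ {w : ℝ → Fin k → ℝ | Measurable w ∧ (∀ x j, 0 ≤ w x j) ∧
      (∀ x, ∑ j, w x j = 1) ∧ ∫ x, ∑ j, w x j * ρ x j ∂P ≤ D}, wCost P Q w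

/-- The rate-distortion function `R(D) = inf_Q R(P,Q,D)`. -/
noncomputable def RofD {k : ℕ} (P : Measure ℝ) (ρ : ℝ → Fin k → ℝ) (D : ℝ) : EReal :=
  ⨅ Q ∈ {Q : Fin k → ℝ | IsPmf Q}, RPQ P ρ Q D

/-- `D_max = min_j E_P[ρ(X,a_j)]`. -/
noncomputable def Dmax {k : ℕ} (P : Measure ℝ) (ρ : ℝ → Fin k → ℝ) : ℝ :=
  sInf (Set.range fun j => ∫ x, ρ x j ∂P)

/-- `D_min^{P,Q} = E_P[min_{a ∈ supp Q} ρ(X,a)]`. -/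
noncomputable def DminPQ {k : ℕ} (P : Measure ℝ) (ρ : ℝ → Fin k → ℝ)
    (Q : Fin k → ℝ) : ℝ :=
  ∫ x, (⨅ j : {j : Fin k // 0 < Q j}, ρ x (j : Fin k)) ∂P

/-- `D_max^{P,Q} = Σ_j Q_j · E_P[ρ(X,a_j)]`. -/
noncomputable def DmaxPQ {k : ℕ} (P : Measure ℝ) (ρ : ℝ → Fin k → ℝ)
    (Q : Fin k → ℝ) : ℝ :=
  ∑ j, Q j * ∫ x, ρ x j ∂P

/-- The Fenchel–Legendre transform `Λ*_{P,Q}(D) = sup_{λ ≤ 0} [λ·D − Λ_{P,Q}(λ)]`. -/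
noncomputable def LamStar {k : ℕ} (P : Measure ℝ) (ρ : ℝ → Fin k → ℝ)
    (Q : Fin k → ℝ) (D : ℝ) : EReal :=
  ⨆ l ∈ Set.Iic (0 : ℝ), ((l * D - Lam P ρ Q l : ℝ) : EReal)


/-! Pointwise facts. -/

lemma aux_Z_pos {k : ℕ} {Q : Fin k → ℝ} (hQ : IsPmf Q) (r : Fin k → ℝ) (l : ℝ) :
    0 < ∑ j, Q j * Real.exp (l * r j) := by
  obtain ⟨h0, h1⟩ := hQ
  have : ∃ j ∈ Finset.univ, 0 < Q j := by
    by_contra! h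
    have : ∑ j, Q j ≤ 0 := Finset.sum_nonpos h
    linarith
  obtain ⟨j, hj, hj'⟩ := this
  exact Finset.sum_pos' (fun i _ => mul_nonneg (h0 i) (Real.exp_pos _).le)
    ⟨j, hj, mul_pos hj' (Real.exp_pos _)⟩

lemma aux_log_bound {k : ℕ} {Q : Fin k → ℝ} (hQ : IsPmf Q) {r : Fin k → ℝ} {l L M : ℝ}
    (hl : |l| ≤ L) (hr : ∀ j, 0 ≤ r j ∧ r j ≤ M) :
    |Real.log (∑ j, Q j * Real.exp (l * r j))| ≤ L * M := by
  have hb : ∀ j, |l * r j| ≤ L * M := fun j => by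
    rw [abs_mul, abs_of_nonneg (hr j).1]
    exact mul_le_mul hl (hr j).2 (hr j).1 ((abs_nonneg _).trans hl)
  have hZ := aux_Z_pos hQ r l
  rw [abs_le]
  constructor
  · rw [Real.le_log_iff_exp_le hZ]
    calc Real.exp (-(L * M)) = ∑ j, Q j * Real.exp (-(L * M)) := by
          rw [← Finset.sum_mul, hQ.2, one_mul]
      _ ≤ _ := Finset.sum_le_sum fun j _ => mul_le_mul_of_nonneg_left
          (Real.exp_le_exp.2 (abs_le.1 (hb j)).1) (hQ.1 j)
  · rw [Real.log_le_iff_le_exp hZ]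
    calc _ ≤ ∑ j, Q j * Real.exp (L * M) := Finset.sum_le_sum fun j _ =>
          mul_le_mul_of_nonneg_left (Real.exp_le_exp.2 (abs_le.1 (hb j)).2) (hQ.1 j)
      _ = Real.exp (L * M) := by
          rw [← Finset.sum_mul, hQ.2, one_mul]

/-- The tilted kernel. -/
noncomputable def tilt {k : ℕ} (Q : Fin k → ℝ) (l : ℝ) (r : Fin k → ℝ) (j : Fin k) : ℝ :=
  Q j * Real.exp (l * r j) / ∑ i, Q i * Real.exp (l * r i)

lemma tilt_nonneg {k : ℕ} {Q : Fin k → ℝ} (hQ : IsPmf Q) (l : ℝ) (r : Fin k → ℝ) (j : Fin k) :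
    0 ≤ tilt Q l r j :=
  div_nonneg (mul_nonneg (hQ.1 j) (Real.exp_pos _).le) (aux_Z_pos hQ r l).le

lemma tilt_pos {k : ℕ} {Q : Fin k → ℝ} (hQ : IsPmf Q) (l : ℝ) (r : Fin k → ℝ) (j : Fin k)
    (hj : 0 < Q j) : 0 < tilt Q l r j :=
  div_pos (mul_pos hj (Real.exp_pos _)) (aux_Z_pos hQ r l)

lemma tilt_zero {k : ℕ} {Q : Fin k → ℝ} (l : ℝ) (r : Fin k → ℝ) (j : Fin k)
    (hj : Q j = 0) : tilt Q l r j = 0 := by simp [tilt, hj]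

lemma tilt_sum {k : ℕ} {Q : Fin k → ℝ} (hQ : IsPmf Q) (l : ℝ) (r : Fin k → ℝ) :
    ∑ j, tilt Q l r j = 1 := by
  unfold tilt
  rw [← Finset.sum_div, div_self (aux_Z_pos hQ r l).ne']

lemma tilt_log {k : ℕ} {Q : Fin k → ℝ} (hQ : IsPmf Q) (l : ℝ) (r : Fin k → ℝ) :
    ∑ j, tilt Q l r j * Real.log (tilt Q l r j / Q j)
      = l * ∑ j, tilt Q l r j * r j - Real.log (∑ j, Q j * Real.exp (l * r j)) := by
  have hZ := aux_Z_pos hQ r l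
  have : ∀ j, tilt Q l r j * Real.log (tilt Q l r j / Q j)
      = l * (tilt Q l r j * r j)
        - tilt Q l r j * Real.log (∑ j, Q j * Real.exp (l * r j)) := by
    intro j
    rcases (hQ.1 j).eq_or_lt with h | h
    · simp [tilt_zero l r j h.symm]
    · have : tilt Q l r j / Q j = Real.exp (l * r j) / ∑ j, Q j * Real.exp (l * r j) := by
        unfold tilt; field_simp
      rw [this, Real.log_div (Real.exp_pos _).ne' hZ.ne', Real.log_exp]; ring
  rw [Finset.sum_congr rfl fun j _ => this j, Finset.sum_sub_distrib, ← Finset.mul_sum,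
    ← Finset.sum_mul, tilt_sum hQ, one_mul]

lemma aux_term {w p : ℝ} (hw : 0 ≤ w) (hp : 0 ≤ p) (h : 0 < w → 0 < p) :
    w - p ≤ w * Real.log (w / p) := by
  rcases hw.eq_or_lt with h0 | h0
  · subst h0; simpa using hp
  · have hp' := h h0
    have h2 := Real.log_le_sub_one_of_pos (div_pos hp' h0)
    have h3 : Real.log (w / p) = - Real.log (p / w) := by
      rw [← Real.log_inv, inv_div]
    rw [h3]
    have h4 := mul_le_mul_of_nonneg_left h2 hw
    have h5 : w * (p / w - 1) = p - w := by field_simp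
    linarith

lemma gibbs {k : ℕ} {Q : Fin k → ℝ} (hQ : IsPmf Q) (l : ℝ) (r w : Fin k → ℝ)
    (hw : ∀ j, 0 ≤ w j) (hw1 : ∑ j, w j = 1) (hwQ : ∀ j, 0 < w j → 0 < Q j) :
    l * ∑ j, w j * r j - Real.log (∑ j, Q j * Real.exp (l * r j))
      ≤ ∑ j, w j * Real.log (w j / Q j) := by
  have hZ := aux_Z_pos hQ r l
  have key : ∀ j, w j * Real.log (w j / Q j) = w j * Real.log (w j / tilt Q l r j)
      + (l * (w j * r j) - w j * Real.log (∑ j, Q j * Real.exp (l * r j))) := by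
    intro j
    rcases (hw j).eq_or_lt with h | h
    · simp [← h]
    · have hq := hwQ j h
      have ht := tilt_pos hQ l r j hq
      have : Real.log (tilt Q l r j) = Real.log (Q j) + l * r j
          - Real.log (∑ j, Q j * Real.exp (l * r j)) := by
        unfold tilt
        rw [Real.log_div (mul_pos hq (Real.exp_pos _)).ne' hZ.ne',
          Real.log_mul hq.ne' (Real.exp_pos _).ne', Real.log_exp]
      rw [Real.log_div h.ne' hq.ne', Real.log_div h.ne' ht.ne', this]; ring
  have h1 : ∑ j, (w j - tilt Q l r j) ≤ ∑ j, w j * Real.log (w j / tilt Q l r j) :=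
    Finset.sum_le_sum fun j _ => aux_term (hw j) (tilt_nonneg hQ l r j)
      fun h => tilt_pos hQ l r j (hwQ j h)
  rw [Finset.sum_sub_distrib, hw1, tilt_sum hQ] at h1
  rw [Finset.sum_congr rfl fun j _ => key j, Finset.sum_add_distrib, Finset.sum_sub_distrib,
    ← Finset.mul_sum, ← Finset.sum_mul, hw1, one_mul]
  linarith

lemma logZ_convex {k : ℕ} {Q : Fin k → ℝ} (hQ : IsPmf Q) (r : Fin k → ℝ) (l m a b : ℝ)
    (ha : 0 ≤ a) (hb : 0 ≤ b) (hab : a + b = 1) :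
    Real.log (∑ j, Q j * Real.exp ((a * l + b * m) * r j))
      ≤ a * Real.log (∑ j, Q j * Real.exp (l * r j))
        + b * Real.log (∑ j, Q j * Real.exp (m * r j)) := by
  set n := a * l + b * m with hn
  have hs : ∀ j, 0 < tilt Q n r j → 0 < Q j := fun j h =>
    (hQ.1 j).lt_of_ne fun h' => by rw [tilt_zero n r j h'.symm] at h; exact lt_irrefl _ h
  have e := tilt_log hQ n r
  have h1 := mul_le_mul_of_nonneg_left
    (gibbs hQ l r _ (tilt_nonneg hQ n r) (tilt_sum hQ n r) hs) ha
  have h2 := mul_le_mul_of_nonneg_left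
    (gibbs hQ m r _ (tilt_nonneg hQ n r) (tilt_sum hQ n r) hs) hb
  set d := ∑ j, tilt Q n r j * r j
  set c := ∑ j, tilt Q n r j * Real.log (tilt Q n r j / Q j)
  have h3 : a * c + b * c = c := by rw [← add_mul, hab, one_mul]
  have h4 : n * d = a * (l * d) + b * (m * d) := by rw [hn]; ring
  linarith

lemma logZ_concave {k : ℕ} {Q R : Fin k → ℝ} (hQ : IsPmf Q) (hR : IsPmf R) (r : Fin k → ℝ)
    (l a b : ℝ) (ha : 0 ≤ a) (hb : 0 ≤ b) (hab : a + b = 1) :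
    a * Real.log (∑ j, Q j * Real.exp (l * r j))
        + b * Real.log (∑ j, R j * Real.exp (l * r j))
      ≤ Real.log (∑ j, (a • Q + b • R) j * Real.exp (l * r j)) := by
  have h := strictConcaveOn_log_Ioi.concaveOn.2 (Set.mem_Ioi.2 (aux_Z_pos hQ r l))
    (Set.mem_Ioi.2 (aux_Z_pos hR r l)) ha hb hab
  have e : ∑ j, (a • Q + b • R) j * Real.exp (l * r j)
      = a * (∑ j, Q j * Real.exp (l * r j)) + b * ∑ j, R j * Real.exp (l * r j) := by
    rw [Finset.mul_sum, Finset.mul_sum, ← Finset.sum_add_distrib]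
    refine Finset.sum_congr rfl fun j _ => ?_
    simp only [Pi.add_apply, Pi.smul_apply, smul_eq_mul]; ring
  rw [e]
  simpa [smul_eq_mul] using h

lemma logZ_deriv {k : ℕ} {Q : Fin k → ℝ} (hQ : IsPmf Q) (r : Fin k → ℝ) (l : ℝ) :
    HasDerivAt (fun l => Real.log (∑ j, Q j * Real.exp (l * r j)))
      (∑ j, tilt Q l r j * r j) l := by
  have h : HasDerivAt (fun l => ∑ j, Q j * Real.exp (l * r j))
      (∑ j, Q j * (Real.exp (l * r j) * r j)) l := by
    refine HasDerivAt.fun_sum fun j _ => ?_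
    refine HasDerivAt.const_mul _ ?_
    simpa using ((hasDerivAt_id l).mul_const (r j)).exp
  convert h.log (aux_Z_pos hQ r l).ne' using 1
  rw [Finset.sum_div]
  refine Finset.sum_congr rfl fun j _ => ?_
  unfold tilt; ring

lemma avg_bound {k : ℕ} {w r : Fin k → ℝ} (hw : ∀ j, 0 ≤ w j) (hw1 : ∑ j, w j = 1) {M : ℝ}
    (hr : ∀ j, 0 ≤ r j ∧ r j ≤ M) : |∑ j, w j * r j| ≤ M := by
  rw [abs_of_nonneg (Finset.sum_nonneg fun j _ => mul_nonneg (hw j) (hr j).1)]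
  calc _ ≤ ∑ j, w j * M := Finset.sum_le_sum fun j _ => mul_le_mul_of_nonneg_left (hr j).2 (hw j)
    _ = M := by rw [← Finset.sum_mul, hw1, one_mul]

/-! Integrated facts. -/

lemma logZ_meas {k : ℕ} {ρ : ℝ → Fin k → ℝ} (hm : ∀ j, Measurable fun x => ρ x j)
    (Q : Fin k → ℝ) (l : ℝ) :
    Measurable fun x => Real.log (∑ j, Q j * Real.exp (l * ρ x j)) := by
  have := hm
  fun_prop

lemma logZ_int {k : ℕ} {P : Measure ℝ} [IsProbabilityMeasure P] {ρ : ℝ → Fin k → ℝ} {M : ℝ}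
    (hm : ∀ j, Measurable fun x => ρ x j) (hb : ∀ᵐ x ∂P, ∀ j, 0 ≤ ρ x j ∧ ρ x j ≤ M)
    {Q : Fin k → ℝ} (hQ : IsPmf Q) (l : ℝ) :
    Integrable (fun x => Real.log (∑ j, Q j * Real.exp (l * ρ x j))) P := by
  refine Integrable.of_bound (logZ_meas hm Q l).aestronglyMeasurable (|l| * M) ?_
  filter_upwards [hb] with x hx
  exact aux_log_bound hQ le_rfl hx

lemma tilt_meas {k : ℕ} {ρ : ℝ → Fin k → ℝ} (hm : ∀ j, Measurable fun x => ρ x j)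
    (Q : Fin k → ℝ) (l : ℝ) (j : Fin k) : Measurable fun x => tilt Q l (ρ x) j := by
  unfold tilt
  have := hm
  fun_prop

lemma avg_int {k : ℕ} {P : Measure ℝ} [IsProbabilityMeasure P] {ρ w : ℝ → Fin k → ℝ} {M : ℝ}
    (hm : ∀ j, Measurable fun x => ρ x j) (hb : ∀ᵐ x ∂P, ∀ j, 0 ≤ ρ x j ∧ ρ x j ≤ M)
    (hwm : ∀ j, Measurable fun x => w x j) (hw : ∀ x j, 0 ≤ w x j)
    (hw1 : ∀ x, ∑ j, w x j = 1) :
    Integrable (fun x => ∑ j, w x j * ρ x j) P := by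
  refine Integrable.of_bound (C := M) ?_ ?_
  · refine Measurable.aestronglyMeasurable ?_
    fun_prop
  filter_upwards [hb] with x hx
  exact avg_bound (hw x) (hw1 x) hx

lemma Lam_deriv {k : ℕ} {P : Measure ℝ} [IsProbabilityMeasure P] {ρ : ℝ → Fin k → ℝ} {M : ℝ}
    (hm : ∀ j, Measurable fun x => ρ x j) (hb : ∀ᵐ x ∂P, ∀ j, 0 ≤ ρ x j ∧ ρ x j ≤ M)
    {Q : Fin k → ℝ} (hQ : IsPmf Q) (l : ℝ) :
    HasDerivAt (Lam P ρ Q) (∫ x, ∑ j, tilt Q l (ρ x) j * ρ x j ∂P) l := by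
  refine (hasDerivAt_integral_of_dominated_loc_of_deriv_le (s := Set.univ)
    (F := fun l x => Real.log (∑ j, Q j * Real.exp (l * ρ x j)))
    (F' := fun l x => ∑ j, tilt Q l (ρ x) j * ρ x j) (bound := fun _ => M)
    Filter.univ_mem ?_ ?_ ?_ ?_ ?_ ?_).2
  · exact Filter.Eventually.of_forall fun l => (logZ_meas hm Q l).aestronglyMeasurable
  · exact logZ_int hm hb hQ l
  · exact (avg_int hm hb (tilt_meas hm Q l) (fun x => tilt_nonneg hQ l _)
      fun x => tilt_sum hQ l _).aestronglyMeasurable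
  · filter_upwards [hb] with x hx l _
    exact avg_bound (tilt_nonneg hQ l _) (tilt_sum hQ l _) hx
  · exact integrable_const _
  · exact Filter.Eventually.of_forall fun x l _ => logZ_deriv hQ _ l

lemma Lam_cont_Q {k : ℕ} {P : Measure ℝ} [IsProbabilityMeasure P] {ρ : ℝ → Fin k → ℝ} {M : ℝ}
    (hm : ∀ j, Measurable fun x => ρ x j) (hb : ∀ᵐ x ∂P, ∀ j, 0 ≤ ρ x j ∧ ρ x j ≤ M)
    (l : ℝ) : ContinuousOn (fun Q => Lam P ρ Q l) (stdSimplex ℝ (Fin k)) := by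
  unfold Lam
  refine continuousOn_of_dominated (bound := fun _ => |l| * M) ?_ ?_ (integrable_const _) ?_
  · intro Q _
    exact (logZ_meas hm Q l).aestronglyMeasurable
  · intro Q hQ
    filter_upwards [hb] with x hx
    exact aux_log_bound hQ le_rfl hx
  · refine Filter.Eventually.of_forall fun x => ?_
    refine ContinuousOn.log ?_ fun Q hQ => (aux_Z_pos hQ _ _).ne'
    fun_prop

lemma cost_int {k : ℕ} {P : Measure ℝ} [IsProbabilityMeasure P] {w : ℝ → Fin k → ℝ}
    (hwm : ∀ j, Measurable fun x => w x j) (hw : ∀ x j, 0 ≤ w x j)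
    (hw1 : ∀ x, ∑ j, w x j = 1) (Q : Fin k → ℝ) :
    Integrable (fun x => ∑ j, w x j * Real.log (w x j / Q j)) P := by
  refine integrable_finsetSum _ fun j _ => ?_
  refine Integrable.of_bound (C := 1 + |Real.log (Q j)|) ?_ ?_
  · refine Measurable.aestronglyMeasurable ?_
    have := hwm j
    fun_prop
  refine Filter.Eventually.of_forall fun x => ?_
  have h1 : w x j ≤ 1 := by
    rw [← hw1 x]
    exact Finset.single_le_sum (fun i _ => hw x i) (Finset.mem_univ j)
  rw [Real.norm_eq_abs]
  rcases (hw x j).eq_or_lt with h | h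
  · rw [← h]; simp; positivity
  by_cases hq : Q j = 0
  · simp [hq]
  rw [Real.log_div h.ne' hq, mul_sub]
  refine (abs_sub _ _).trans (add_le_add ?_ ?_)
  · rw [mul_comm]; exact (Real.abs_log_mul_self_lt _ h h1).le
  · rw [abs_mul, abs_of_pos h]
    exact mul_le_of_le_one_left (abs_nonneg _) h1

lemma cost_logb {k : ℕ} {P : Measure ℝ} (w : ℝ → Fin k → ℝ) (Q : Fin k → ℝ) :
    ∫ x, ∑ j, w x j * Real.logb 2 (w x j / Q j) ∂P
      = (∫ x, ∑ j, w x j * Real.log (w x j / Q j) ∂P) / Real.log 2 := by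
  rw [← integral_div]
  congr 1
  funext x
  rw [Finset.sum_div]
  refine Finset.sum_congr rfl fun j _ => ?_
  rw [Real.logb, mul_div_assoc]

lemma weak_dual {k : ℕ} {P : Measure ℝ} [IsProbabilityMeasure P] {ρ : ℝ → Fin k → ℝ} {M : ℝ}
    (hm : ∀ j, Measurable fun x => ρ x j) (hb : ∀ᵐ x ∂P, ∀ j, 0 ≤ ρ x j ∧ ρ x j ≤ M)
    {Q : Fin k → ℝ} (hQ : IsPmf Q) {l : ℝ} (hl : l ≤ 0) (D : ℝ) :
    (((l * D - Lam P ρ Q l) / Real.log 2 : ℝ) : EReal) ≤ RPQ P ρ Q D := by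
  unfold RPQ
  refine le_iInf₂ fun w hw => ?_
  obtain ⟨hwm, hw0, hw1, hwD⟩ := hw
  have hwm' : ∀ j, Measurable fun x => w x j := fun j => (measurable_pi_apply j).comp hwm
  unfold wCost
  split_ifs with hs
  · rw [EReal.coe_le_coe_iff, cost_logb]
    refine div_le_div_of_nonneg_right ?_ (Real.log_nonneg one_le_two)
    have i1 := avg_int hm hb hwm' hw0 hw1
    have i2 := logZ_int hm hb hQ l
    have h1 : ∫ x, (l * ∑ j, w x j * ρ x j
        - Real.log (∑ j, Q j * Real.exp (l * ρ x j))) ∂P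
        ≤ ∫ x, ∑ j, w x j * Real.log (w x j / Q j) ∂P := by
      refine integral_mono_ae ((i1.const_mul l).sub i2) (cost_int hwm' hw0 hw1 Q) ?_
      filter_upwards [hs] with x hx
      exact gibbs hQ l _ _ (hw0 x) (hw1 x) hx
    rw [integral_sub (i1.const_mul l) i2, integral_const_mul] at h1
    have h2 := mul_le_mul_of_nonpos_left hwD hl
    unfold Lam
    linarith
  · exact le_top

lemma strong_dual {k : ℕ} {P : Measure ℝ} [IsProbabilityMeasure P] {ρ : ℝ → Fin k → ℝ} {M : ℝ}
    (hm : ∀ j, Measurable fun x => ρ x j) (hb : ∀ᵐ x ∂P, ∀ j, 0 ≤ ρ x j ∧ ρ x j ≤ M)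
    {Q : Fin k → ℝ} (hQ : IsPmf Q) {l : ℝ} {D : ℝ}
    (hD : ∫ x, ∑ j, tilt Q l (ρ x) j * ρ x j ∂P = D) :
    RPQ P ρ Q D ≤ (((l * D - Lam P ρ Q l) / Real.log 2 : ℝ) : EReal) := by
  unfold RPQ
  refine (iInf₂_le (fun x => tilt Q l (ρ x)) ⟨measurable_pi_iff.2 (tilt_meas hm Q l),
    fun x => tilt_nonneg hQ l _, fun x => tilt_sum hQ l _, hD.le⟩).trans ?_
  unfold wCost
  rw [if_pos]
  · rw [EReal.coe_le_coe_iff, cost_logb]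
    refine div_le_div_of_nonneg_right (le_of_eq ?_) (Real.log_nonneg one_le_two)
    have i1 := avg_int hm hb (tilt_meas hm Q l) (fun x => tilt_nonneg hQ l (ρ x))
      (fun x => tilt_sum hQ l (ρ x))
    have i2 := logZ_int hm hb hQ l
    simp_rw [tilt_log hQ]
    rw [integral_sub (i1.const_mul l) i2, integral_const_mul, hD]
    rfl
  · refine Filter.Eventually.of_forall fun x j h => (hQ.1 j).lt_of_ne fun h' => ?_
    have h2 : 0 < tilt Q l (ρ x) j := h
    rw [tilt_zero l _ j h'.symm] at h2; exact lt_irrefl _ h2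

lemma exists_saddle {k : ℕ} (hk : 0 < k) {P : Measure ℝ} [IsProbabilityMeasure P]
    {ρ : ℝ → Fin k → ℝ} {M : ℝ}
    (hm : ∀ j, Measurable fun x => ρ x j) (hb : ∀ᵐ x ∂P, ∀ j, 0 ≤ ρ x j ∧ ρ x j ≤ M)
    (D L : ℝ) (hL : 0 ≤ L) :
    ∃ Q ∈ stdSimplex ℝ (Fin k), ∃ l ∈ Set.Icc (-L) 0,
      IsSaddlePointOn (stdSimplex ℝ (Fin k)) (Set.Icc (-L) 0)
        (fun Q l => l * D - Lam P ρ Q l) Q l := by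
  have : Nonempty (Fin k) := ⟨⟨0, hk⟩⟩
  refine Sion.exists_isSaddlePointOn ?_ (convex_stdSimplex ℝ _) (isCompact_stdSimplex ℝ _) ?_ ?_
    (convex_Icc _ _) ⟨0, by simpa using hL⟩ isCompact_Icc ?_ ?_
  · exact ⟨_, single_mem_stdSimplex ℝ (⟨0, hk⟩ : Fin k)⟩
  · intro l _
    exact (continuousOn_const.sub (Lam_cont_Q hm hb l)).lowerSemicontinuousOn
  · intro l _
    refine ConvexOn.quasiconvexOn ⟨convex_stdSimplex ℝ _, ?_⟩
    intro Q hQ R hR a b ha hb' hab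
    have h : ∫ x, (a * Real.log (∑ j, Q j * Real.exp (l * ρ x j))
        + b * Real.log (∑ j, R j * Real.exp (l * ρ x j))) ∂P ≤ Lam P ρ (a • Q + b • R) l := by
      refine integral_mono (((logZ_int hm hb hQ l).const_mul a).add
        ((logZ_int hm hb hR l).const_mul b)) (logZ_int hm hb
          (convex_stdSimplex ℝ _ hQ hR ha hb' hab) l) fun x => ?_
      exact logZ_concave hQ hR _ l a b ha hb' hab
    rw [integral_add ((logZ_int hm hb hQ l).const_mul a)
        ((logZ_int hm hb hR l).const_mul b), integral_const_mul, integral_const_mul] at h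
    simp only [smul_eq_mul]
    have e : l * D = a * (l * D) + b * (l * D) := by rw [← add_mul, hab, one_mul]
    unfold Lam at h ⊢
    linarith
  · intro Q hQ
    refine Continuous.upperSemicontinuous ?_ |>.upperSemicontinuousOn _
    exact (continuous_id.mul continuous_const).sub
      (continuous_iff_continuousAt.2 fun l => (Lam_deriv hm hb hQ l).continuousAt)
  · intro Q hQ
    refine ConcaveOn.quasiconcaveOn ⟨convex_Icc _ _, ?_⟩
    intro l _ m _ a b ha hb' hab
    have h : Lam P ρ Q (a * l + b * m) ≤ ∫ x, (a * Real.log (∑ j, Q j * Real.exp (l * ρ x j))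
        + b * Real.log (∑ j, Q j * Real.exp (m * ρ x j))) ∂P := by
      refine integral_mono (logZ_int hm hb hQ _) (((logZ_int hm hb hQ l).const_mul a).add
        ((logZ_int hm hb hQ m).const_mul b)) fun x => ?_
      exact logZ_convex hQ _ l m a b ha hb' hab
    rw [integral_add ((logZ_int hm hb hQ l).const_mul a)
        ((logZ_int hm hb hQ m).const_mul b), integral_const_mul, integral_const_mul] at h
    simp only [smul_eq_mul]
    have e : (a * l + b * m) * D = a * (l * D) + b * (m * D) := by ring
    unfold Lam at h ⊢
    linarith

lemma Dmax_le {k : ℕ} {P : Measure ℝ} {ρ : ℝ → Fin k → ℝ} {Q : Fin k → ℝ} (hQ : IsPmf Q) :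
    Dmax P ρ ≤ DmaxPQ P ρ Q := by
  have h : ∀ j, Dmax P ρ ≤ ∫ x, ρ x j ∂P := fun j =>
    csInf_le (Set.finite_range _).bddBelow ⟨j, rfl⟩
  calc Dmax P ρ = ∑ j, Q j * Dmax P ρ := by rw [← Finset.sum_mul, hQ.2, one_mul]
    _ ≤ _ := Finset.sum_le_sum fun j _ => mul_le_mul_of_nonneg_left (h j) (hQ.1 j)

lemma tilt_at_zero {k : ℕ} {Q : Fin k → ℝ} (hQ : IsPmf Q) (r : Fin k → ℝ) (j : Fin k) :
    tilt Q 0 r j = Q j := by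
  simp [tilt, hQ.2]

lemma DmaxPQ_eq {k : ℕ} {P : Measure ℝ} [IsProbabilityMeasure P] {ρ : ℝ → Fin k → ℝ} {M : ℝ}
    (hm : ∀ j, Measurable fun x => ρ x j) (hb : ∀ᵐ x ∂P, ∀ j, 0 ≤ ρ x j ∧ ρ x j ≤ M)
    (Q : Fin k → ℝ) : DmaxPQ P ρ Q = ∫ x, ∑ j, Q j * ρ x j ∂P := by
  have hi : ∀ j, Integrable (fun x => ρ x j) P := fun j => by
    refine Integrable.of_bound (hm j).aestronglyMeasurable M ?_
    filter_upwards [hb] with x hx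
    rw [Real.norm_eq_abs, abs_of_nonneg (hx j).1]; exact (hx j).2
  rw [integral_finsetSum _ fun j _ => (hi j).const_mul _]
  simp_rw [integral_const_mul]
  rfl

lemma Dmin_lt {k : ℕ} {P : Measure ℝ} [IsProbabilityMeasure P] {ρ : ℝ → Fin k → ℝ} {M : ℝ}
    (hm : ∀ j, Measurable fun x => ρ x j) (hb : ∀ᵐ x ∂P, ∀ j, 0 ≤ ρ x j ∧ ρ x j ≤ M)
    {Q : Fin k → ℝ} (hQ : IsPmf Q) {l : ℝ} {D : ℝ}
    (hD : ∫ x, ∑ j, tilt Q l (ρ x) j * ρ x j ∂P = D) (hlt : D < DmaxPQ P ρ Q) :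
    DminPQ P ρ Q < D := by
  by_contra! hcon
  have hne : Nonempty {j : Fin k // 0 < Q j} := by
    by_contra! h
    have : ∑ j, Q j ≤ 0 := Finset.sum_nonpos fun j _ => by
      by_contra! hj
      exact h.false ⟨j, hj⟩
    linarith [hQ.2]
  set m : ℝ → ℝ := fun x => ⨅ j : {j : Fin k // 0 < Q j}, ρ x (j : Fin k) with hmdef
  have hmle : ∀ x j, 0 < Q j → m x ≤ ρ x j := fun x j hj =>
    ciInf_le (f := fun j : {j : Fin k // 0 < Q j} => ρ x (j : Fin k))
      (Set.finite_range _).bddBelow ⟨j, hj⟩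
  have hmm : Measurable m := Measurable.iInf fun j => hm j
  have hmi : Integrable m P := by
    refine Integrable.of_bound hmm.aestronglyMeasurable M ?_
    filter_upwards [hb] with x hx
    rw [Real.norm_eq_abs, abs_of_nonneg (show 0 ≤ m x from le_ciInf fun j => (hx j).1)]
    obtain ⟨j, hj⟩ := hne
    exact (hmle x j hj).trans (hx j).2
  have i1 := avg_int hm hb (tilt_meas hm Q l) (fun x => tilt_nonneg hQ l (ρ x))
      (fun x => tilt_sum hQ l (ρ x))
  have hterm : ∀ x j, 0 ≤ tilt Q l (ρ x) j * (ρ x j - m x) := fun x j => by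
    rcases (hQ.1 j).eq_or_lt with h | h
    · simp [tilt_zero l (ρ x) j h.symm]
    · exact mul_nonneg (tilt_nonneg hQ l _ j) (sub_nonneg.2 (hmle x j h))
  have hdiff : ∀ x, ∑ j, tilt Q l (ρ x) j * (ρ x j - m x)
      = ∑ j, tilt Q l (ρ x) j * ρ x j - m x := fun x => by
    simp_rw [mul_sub]
    rw [Finset.sum_sub_distrib, ← Finset.sum_mul, tilt_sum hQ, one_mul]
  have hnn : 0 ≤ fun x => ∑ j, tilt Q l (ρ x) j * ρ x j - m x := fun x => by
    show (0 : ℝ) ≤ ∑ j, tilt Q l (ρ x) j * ρ x j - m x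
    rw [← hdiff]
    exact Finset.sum_nonneg fun j _ => hterm x j
  have hz : ∫ x, (∑ j, tilt Q l (ρ x) j * ρ x j - m x) ∂P = 0 := by
    refine le_antisymm ?_ (integral_nonneg hnn)
    rw [integral_sub i1 hmi, hD]
    have : DminPQ P ρ Q = ∫ x, m x ∂P := rfl
    linarith
  rw [integral_eq_zero_iff_of_nonneg hnn (i1.sub hmi)] at hz
  have : DmaxPQ P ρ Q = D := by
    rw [DmaxPQ_eq hm hb, ← hD]
    refine integral_congr_ae ?_
    filter_upwards [hz] with x hx
    have hx' : ∑ j, tilt Q l (ρ x) j * ρ x j - m x = 0 := hx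
    have h0 := hx'
    rw [← hdiff, Finset.sum_eq_zero_iff_of_nonneg fun j _ => hterm x j] at h0
    have : ∀ j, Q j * ρ x j = Q j * m x := fun j => by
      rcases (hQ.1 j).eq_or_lt with h | h
      · simp [← h]
      · have h1 := (mul_eq_zero.1 (h0 j (Finset.mem_univ j))).resolve_left
          (tilt_pos hQ l _ j h).ne'
        rw [sub_eq_zero.1 h1]
    show ∑ j, Q j * ρ x j = _
    rw [Finset.sum_congr rfl fun j _ => this j, ← Finset.sum_mul, hQ.2, one_mul]
    linarith
  linarith

lemma unif_bound {k : ℕ} (hk : 0 < k) {P : Measure ℝ} [IsProbabilityMeasure P]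
    {ρ : ℝ → Fin k → ℝ} {M : ℝ}
    (hm : ∀ j, Measurable fun x => ρ x j) (hb : ∀ᵐ x ∂P, ∀ j, 0 ≤ ρ x j ∧ ρ x j ≤ M)
    (hz : ∀ᵐ x ∂P, ∃ j, ρ x j = 0) (l : ℝ) :
    ∃ Q : Fin k → ℝ, IsPmf Q ∧ -Real.log k ≤ Lam P ρ Q l := by
  have hk' : (0 : ℝ) < k := Nat.cast_pos.2 hk
  have hU : IsPmf (fun _ : Fin k => (k : ℝ)⁻¹) :=
    ⟨fun _ => (inv_pos.2 hk').le, by simp [hk'.ne']⟩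
  refine ⟨_, hU, ?_⟩
  have : ∫ _, -Real.log k ∂P = -Real.log k := by simp
  rw [← this]
  refine integral_mono_ae (integrable_const _) (logZ_int hm hb hU l) ?_
  filter_upwards [hz] with x hx
  obtain ⟨j, hj⟩ := hx
  rw [← Real.log_inv]
  refine Real.log_le_log (inv_pos.2 hk') ?_
  have h := Finset.single_le_sum (f := fun j => (k : ℝ)⁻¹ * Real.exp (l * ρ x j))
    (fun i _ => mul_nonneg (inv_pos.2 hk').le (Real.exp_pos _).le) (Finset.mem_univ j)
  simpa [hj] using h

/-- **Proposition 1(iv).** For every `D ∈ (0, D_max)` there is a pmf `Q*` achieving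
`R(P,Q*,D) = R(D)`, and it satisfies `D_min^{P,Q*} < D < D_max^{P,Q*}`. -/
theorem stmt_13 {k : ℕ} (hk : 0 < k) (A : Set ℝ) (hA : MeasurableSet A)
    (P : Measure ℝ) [IsProbabilityMeasure P] (hsupp : P Aᶜ = 0)
    (M : ℝ) (ρ : ℝ → Fin k → ℝ) (hρmeas : ∀ j, Measurable fun x => ρ x j)
    (hρnn : ∀ x ∈ A, ∀ j, 0 ≤ ρ x j) (hρM : ∀ x ∈ A, ∀ j, ρ x j ≤ M)
    (hρmin : ∀ x ∈ A, ∃ j, ρ x j = 0)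
    (hDmax : 0 < Dmax P ρ) :
    ∀ D : ℝ, 0 < D → D < Dmax P ρ →
      ∃ Q : Fin k → ℝ, IsPmf Q ∧ RPQ P ρ Q D = RofD P ρ D ∧
        DminPQ P ρ Q < D ∧ D < DmaxPQ P ρ Q := by
  intro D hD0 hDlt
  have hae : ∀ᵐ x ∂P, x ∈ A := hsupp
  have hb : ∀ᵐ x ∂P, ∀ j, 0 ≤ ρ x j ∧ ρ x j ≤ M := by
    filter_upwards [hae] with x hx j
    exact ⟨hρnn x hx j, hρM x hx j⟩
  have hz : ∀ᵐ x ∂P, ∃ j, ρ x j = 0 := by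
    filter_upwards [hae] with x hx
    exact hρmin x hx
  have hlogk : 0 ≤ Real.log k := Real.log_natCast_nonneg k
  set L : ℝ := Real.log k / D + 1 with hLdef
  have hL : 0 < L := by positivity
  have hLD : Real.log k < L * D := by
    rw [hLdef, add_mul, div_mul_cancel₀ _ hD0.ne']; linarith
  obtain ⟨Q, hQ, l, hl, hs⟩ := exists_saddle hk hρmeas hb D L hL.le
  have hQ' : IsPmf Q := hQ
  have hs' : ∀ R ∈ stdSimplex ℝ (Fin k), ∀ m ∈ Set.Icc (-L) 0,
      m * D - Lam P ρ Q m ≤ l * D - Lam P ρ R l := fun R hR m hm' => hs R hR m hm'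
  have hmax : ∀ m ∈ Set.Icc (-L) 0, m * D - Lam P ρ Q m ≤ l * D - Lam P ρ Q l :=
    fun m hm' => hs' Q hQ m hm'
  have hDmaxQ : D < DmaxPQ P ρ Q := hDlt.trans_le (Dmax_le hQ')
  have hder : ∀ m, HasDerivAt (fun m => m * D - Lam P ρ Q m)
      (D - ∫ x, ∑ j, tilt Q m (ρ x) j * ρ x j ∂P) m := fun m => by
    have := ((hasDerivAt_id m).mul_const D).sub (Lam_deriv hρmeas hb hQ' m)
    rw [one_mul] at this
    exact this
  have hlL : l ≠ -L := by
    intro h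
    obtain ⟨U, hU, hUb⟩ := unif_bound hk hρmeas hb hz l
    have h1 := hs' U hU 0 ⟨by linarith, le_rfl⟩
    have h2 : Lam P ρ Q 0 = 0 := by simp [Lam, hQ'.2]
    rw [h2, h] at h1
    rw [h] at hUb
    linarith
  have hl0 : l ≠ 0 := by
    intro h
    have hd := hder 0
    simp_rw [tilt_at_zero hQ'] at hd
    rw [← DmaxPQ_eq hρmeas hb] at hd
    have hneg : D - DmaxPQ P ρ Q < 0 := by linarith
    have ht := hd.tendsto_slope
    have hev := (ht.mono_left (nhdsWithin_mono (0:ℝ) (fun y (hy : y ∈ Set.Iio (0:ℝ)) =>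
      (ne_of_lt hy : y ≠ 0)))).eventually (Iio_mem_nhds hneg)
    have hev2 : ∀ᶠ y in nhdsWithin (0:ℝ) (Set.Iio 0), y ∈ Set.Ioo (-L) 0 :=
      Ioo_mem_nhdsLT (by linarith)
    obtain ⟨y, hy1, hy2⟩ := (hev.and hev2).exists
    have h3 := hmax y ⟨hy2.1.le, hy2.2.le⟩
    rw [h] at h3
    rw [slope_def_field, div_neg_iff] at hy1
    rcases hy1 with hy1 | hy1
    · linarith [hy1.1]
    · linarith [hy1.2, hy2.2]
  have hlint : l ∈ Set.Ioo (-L) 0 := ⟨hl.1.lt_of_ne hlL.symm, hl.2.lt_of_ne hl0⟩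
  have hloc : IsLocalMax (fun m => m * D - Lam P ρ Q m) l := by
    filter_upwards [Icc_mem_nhds hlint.1 hlint.2] with m hm'
    exact hmax m hm'
  have hcrit := hloc.hasDerivAt_eq_zero (hder l)
  have hDeq : ∫ x, ∑ j, tilt Q l (ρ x) j * ρ x j ∂P = D := by linarith
  refine ⟨Q, hQ', le_antisymm ?_ ?_, Dmin_lt hρmeas hb hQ' hDeq hDmaxQ, hDmaxQ⟩
  · refine le_iInf₂ fun R hR => ?_
    refine (strong_dual hρmeas hb hQ' hDeq).trans (le_trans ?_
      (weak_dual hρmeas hb hR hl.2 D))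
    rw [EReal.coe_le_coe_iff]
    exact div_le_div_of_nonneg_right (hs' R hR l hl) (Real.log_nonneg one_le_two)
  · exact iInf₂_le Q hQ'
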